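/- For all integers 1 ≤ i ≤ d and every real number β < d − i + 1, the integral ∫_{M_{d,i}(𝒪)} ‖s₁ ∧ ⋯ ∧ s_i‖^{−β} dμ_{di}(s) is finite (taken in the extended sense; the integrand is infinite only on the null set where the columns s₁, …, s_i of s are linearly dependent). -/

import Mathlib

/-!
Write `q` for the size of `F` and `d = i + e`. An integral matrix has wedge norm `0` or `q ^ (-n)`
with `n ≥ 0`, so the integral is at most the sum over `n` of `q ^ (n β)` times the measure of the set
`degenerate F d i n`, which contains all integral matrices with wedge norm at most `q ^ (-n)`
(`rpow_wedgeNorm_le`). It suffices to bound this measure by `(n + 1) ^ i * q ^ (-n (e + 1))`: the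
series then converges as `β < e + 1`.

That set is a union of residue classes modulo `X ^ n`. By translation invariance they all have the
same measure, so the measure of the set is the proportion of `d × i` matrices over the finite ring
`𝔽_q[[X]] / (X ^ n)` whose `i × i` minors all vanish (`measure_degenerate_le`). Only the invariance
and the normalization of `μ` are used, neither uniqueness of Haar measure nor Fubini's theorem.

The proportion is bounded by induction on the number of columns (`card_minorsDvd_le`). More
generally, one counts matrices whose minors are divisible by `x ^ k`. If the first column is
`x ^ j • u` with a unit coordinate `u r`, then row operations clear the other entries of that
column, and the minors through row `r` are `x ^ j` times a unit times the minors of the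
`(d - 1) × (i - 1)` Schur complement; the latter minors are divisible by `x ^ (k - j)`. A proportion
at most `q ^ (-j d)` of all columns is divisible by `x ^ j`, and `q ^ (-j d)` times the inductive
bound `(k - j + 1) ^ (i - 1) * q ^ (-(k - j) (e + 1))` is at most `(k + 1) ^ (i - 1) * q ^ (-k (e + 1))`
because `d ≥ e + 1`; summing over the `k + 1` values of `j` gives the claim.
-/

open MeasureTheory
open scoped Classical ENNReal

noncomputable section

variable (F : Type*) [Field F] [Fintype F]

/-- The absolute value `|x| = q^{-v(x)}` on the Laurent series field `K = 𝔽_q((X))`,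
where `v` is the `X`-adic valuation (the order of vanishing). -/
def absv (x : LaurentSeries F) : ℝ :=
  if x = 0 then 0 else (Fintype.card F : ℝ) ^ (-(HahnSeries.order x))

instance : MeasurableSpace (LaurentSeries F) := borel _

instance (m n : ℕ) : MeasurableSpace (Matrix (Fin m) (Fin n) (LaurentSeries F)) := borel _

instance (d : ℕ) : MeasurableSpace (Fin d → LaurentSeries F) := borel _

/-- the set of matrices with all entries in the valuation ring `𝒪 = 𝔽_q[[X]] = {x : |x| ≤ 1}`. -/
def intMat (m n : ℕ) : Set (Matrix (Fin m) (Fin n) (LaurentSeries F)) :=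
  {s | ∀ k l, absv F (s k l) ≤ 1}

/-- sup norm of a vector in `K^d` -/
def supNorm {d : ℕ} (v : Fin d → LaurentSeries F) : ℝ := ⨆ j, absv F (v j)

/-- the `i × i` minor of a `d × i` matrix with row set `I`. -/
def minor {d i : ℕ} (s : Matrix (Fin d) (Fin i) (LaurentSeries F))
    (I : {I : Finset (Fin d) // I.card = i}) : LaurentSeries F :=
  (s.submatrix (fun a : Fin i => ((I.1.orderIsoOfFin I.2 a : {x // x ∈ I.1}) : Fin d)) id).det

/-- The norm `‖s₁ ∧ ⋯ ∧ s_i‖` of the wedge product of the columns of a `d × i` matrix: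
the maximum of the absolute values of its `i × i` minors. -/
def wedgeNorm {d i : ℕ} (s : Matrix (Fin d) (Fin i) (LaurentSeries F)) : ℝ :=
  ⨆ I : {I : Finset (Fin d) // I.card = i}, absv F (minor F s I)

/-- `X ∈ K`, the uniformizer. -/
def Xu : LaurentSeries F := HahnSeries.single 1 1

/-- the diagonal element `g_t = diag(X^{-nt} I_m, X^{mt} I_n)`. -/
def gMat (m n : ℕ) (t : ℤ) : Matrix (Fin (m + n)) (Fin (m + n)) (LaurentSeries F) :=
  Matrix.reindex finSumFinEquiv finSumFinEquiv
    (Matrix.fromBlocks ((Xu F ^ (-(n * t))) • (1 : Matrix (Fin m) (Fin m) (LaurentSeries F))) 0 0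
      ((Xu F ^ ((m : ℤ) * t)) • (1 : Matrix (Fin n) (Fin n) (LaurentSeries F))))

/-- the upper block-unipotent element `u_s` with blocks `(I_m, s; 0, I_n)`. -/
def uMat {m n : ℕ} (s : Matrix (Fin m) (Fin n) (LaurentSeries F)) :
    Matrix (Fin (m + n)) (Fin (m + n)) (LaurentSeries F) :=
  Matrix.reindex finSumFinEquiv finSumFinEquiv (Matrix.fromBlocks 1 s 0 1)

/-- the exponent `β_i = m/i` for `i ≤ m` and `n/(m+n-i)` for `i > m`. -/
def betaE (m n i : ℕ) : ℝ := if i ≤ m then (m : ℝ) / i else (n : ℝ) / ((m + n - i : ℕ) : ℝ)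

end

/-! ### Counting degenerate matrices over a finite chain ring -/

/-- The `d × i` matrices over `R` all of whose `i × i` minors (rows indexed by an arbitrary map,
not necessarily injective or increasing) are divisible by `x ^ k`. -/
def minorsDvd {R : Type*} [CommRing R] (x : R) (d i k : ℕ) : Set (Matrix (Fin d) (Fin i) R) :=
  {S | ∀ f : Fin i → Fin d, x ^ k ∣ (S.submatrix f id).det}

/-- Every vector is `x ^ j • u` where `j` is capped at `k`, and `u` has a unit coordinate unless the
cap is reached. -/
theorem exists_level {R : Type*} [CommRing R] (x : R) (h1 : ∀ a : R, x ∣ a ∨ IsUnit a)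
    {d : ℕ} (v : Fin d → R) (k : ℕ) :
    ∃ j ≤ k, ∃ u : Fin d → R, (∀ r, v r = x ^ j * u r) ∧ (j = k ∨ ∃ r, IsUnit (u r)) := by
  induction k with
  | zero => exact ⟨0, le_rfl, v, by simp, Or.inl rfl⟩
  | succ k ih =>
    obtain ⟨j, hj, u, hu, h⟩ := ih
    by_cases hr : ∃ r, IsUnit (u r)
    · exact ⟨j, by omega, u, hu, Or.inr hr⟩
    · have hjk : j = k := h.resolve_right hr
      push Not at hr
      choose w hw using fun r => (h1 (u r)).resolve_right (hr r)
      refine ⟨k + 1, le_rfl, w, fun r => ?_, Or.inl rfl⟩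
      rw [hu, hw, hjk, pow_succ]; ring

/-- The matrix `(v, S)` with first column `v`. -/
def consCol {R : Type*} {d i : ℕ} (v : Fin d → R) (S : Matrix (Fin d) (Fin i) R) :
    Matrix (Fin d) (Fin (i + 1)) R :=
  Matrix.of fun a => Fin.cons (v a) (S a)

/-- The matrix obtained from `S` by subtracting `c a` times row `r` from the `a`-th of the other
rows, and deleting row `r`. For `c a = v (r.succAbove a) / v r` this is the Schur complement of the
entry `v r` in `consCol v S`. -/
def schurRow {R : Type*} [CommRing R] {d i : ℕ} (c : Fin d → R) (r : Fin (d + 1))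
    (S : Matrix (Fin (d + 1)) (Fin i) R) : Matrix (Fin d) (Fin i) R :=
  Matrix.of fun a b => S (r.succAbove a) b - c a * S r b

theorem det_consCol {R : Type*} [CommRing R] {d i : ℕ} (v : Fin (d + 1) → R) (c : Fin d → R)
    (r : Fin (d + 1)) (hc : ∀ a, v (r.succAbove a) = c a * v r)
    (S : Matrix (Fin (d + 1)) (Fin i) R) (f : Fin i → Fin d) :
    ((consCol v S).submatrix (Fin.cons r (r.succAbove ∘ f) : Fin (i + 1) → Fin (d + 1)) id).det
      = v r * ((schurRow c r S).submatrix f id).det := by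
  rw [Matrix.det_eq_of_forall_row_eq_smul_add_const
    (B := Matrix.of (Fin.cons (Fin.cons (v r) (S r))
      fun a => Fin.cons 0 ((schurRow c r S) (f a))))
    (Fin.cons 0 (c ∘ f)) 0 (by simp)]
  · rw [Matrix.det_succ_column_zero, Finset.sum_eq_single 0]
    · simp only [Fin.val_zero, pow_zero, one_mul, Matrix.of_apply, Fin.cons_zero]
      rfl
    · intro b _ hb
      obtain ⟨b, rfl⟩ := Fin.exists_succ_eq.mpr hb
      simp
    · simp
  · intro a b
    refine Fin.cases ?_ (fun a => ?_) a <;> refine Fin.cases ?_ (fun b => ?_) b <;>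
      simp [consCol, schurRow, hc]

/-- If the first column is `v = x ^ j • u` with `u` having a unit coordinate `r`, clearing the column
with row `r` shows that the `i`-minors of the `d × i` Schur complement are divisible by
`x ^ (k - j)`. The row `r` itself remains free, which gives the factor `Nat.card R ^ i`. -/
theorem card_fibre_le {R : Type*} [CommRing R] [Finite R] (x : R) (N : ℕ)
    (h1 : ∀ a : R, x ∣ a ∨ IsUnit a)
    (h2 : ∀ j k, j ≤ k → k ≤ N → ∀ a : R, x ^ k ∣ x ^ j * a → x ^ (k - j) ∣ a)
    (d i k : ℕ) (hk : k ≤ N) (v : Fin (d + 1) → R) :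
    ∃ j ≤ k, (∀ r, x ^ j ∣ v r) ∧
      Nat.card {S : Matrix (Fin (d + 1)) (Fin i) R // consCol v S ∈ minorsDvd x (d + 1) (i + 1) k}
        ≤ Nat.card R ^ i * Nat.card (minorsDvd x d i (k - j)) := by
  obtain ⟨j, hj, u, hu, h⟩ := exists_level x h1 v k
  refine ⟨j, hj, fun r => ⟨u r, hu r⟩, ?_⟩
  have hfun : Nat.card R ^ i = Nat.card (Fin i → R) := by simp [Nat.card_fun]
  rw [hfun, ← Nat.card_prod]
  have key : ∃ (r : Fin (d + 1)) (c : Fin d → R), ∀ S : Matrix (Fin (d + 1)) (Fin i) R,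
      consCol v S ∈ minorsDvd x (d + 1) (i + 1) k → schurRow c r S ∈ minorsDvd x d i (k - j) := by
    rcases h with rfl | ⟨r, hr⟩
    · exact ⟨0, 0, fun S _ f => by simp⟩
    · obtain ⟨y, hy⟩ := hr.exists_left_inv
      refine ⟨r, fun a => u (r.succAbove a) * y, fun S hS f => ?_⟩
      have := hS (Fin.cons r (r.succAbove ∘ f))
      rw [det_consCol v (fun a => u (r.succAbove a) * y) r, hu r, mul_assoc] at this
      · exact (hr.dvd_mul_left).1 (h2 j k hj hk _ this)
      · intro a
        rw [hu, hu r]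
        linear_combination (-(x ^ j * u (r.succAbove a))) * hy
  obtain ⟨r, c, hT⟩ := key
  refine Nat.card_le_card_of_injective
    (fun S => (S.1 r, ⟨schurRow c r S.1, hT S.1 S.2⟩)) ?_
  rintro ⟨S, hS⟩ ⟨S', hS'⟩ hSS
  simp only [Prod.mk.injEq, Subtype.mk.injEq] at hSS
  obtain ⟨e1, e2⟩ := hSS
  rw [Subtype.mk.injEq]
  ext a b
  rcases Fin.eq_self_or_eq_succAbove r a with rfl | ⟨a, rfl⟩
  · rw [e1]
  · have := congrFun (congrFun e2 a) b
    simp only [schurRow, Matrix.of_apply, e1] at this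
    exact sub_left_injective this

theorem card_minorsDvd_succ_le {R : Type*} [CommRing R] [Finite R] (x : R) (N : ℕ)
    (h1 : ∀ a : R, x ∣ a ∨ IsUnit a)
    (h2 : ∀ j k, j ≤ k → k ≤ N → ∀ a : R, x ^ k ∣ x ^ j * a → x ^ (k - j) ∣ a)
    (d i k : ℕ) (hk : k ≤ N) :
    Nat.card (minorsDvd x (d + 1) (i + 1) k) ≤ ∑ j ∈ Finset.range (k + 1),
      Nat.card {a : R // x ^ j ∣ a} ^ (d + 1) *
        (Nat.card R ^ i * Nat.card (minorsDvd x d i (k - j))) := by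
  have := Fintype.ofFinite R
  have hdec : ∀ (j : ℕ) (v : Fin (d + 1) → R), Decidable (∀ r, x ^ j ∣ v r) :=
    fun _ _ => Classical.propDecidable _
  calc Nat.card (minorsDvd x (d + 1) (i + 1) k)
      ≤ Nat.card (Σ v : Fin (d + 1) → R, {S : Matrix (Fin (d + 1)) (Fin i) R //
          consCol v S ∈ minorsDvd x (d + 1) (i + 1) k}) := by
        have hcons : ∀ S : Matrix (Fin (d + 1)) (Fin (i + 1)) R,
            consCol (fun a => S a 0) (Matrix.of fun a b => S a b.succ) = S := by
          intro S
          ext a b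
          refine Fin.cases ?_ (fun b => ?_) b <;> simp [consCol]
        refine Nat.card_le_card_of_injective (fun S => ⟨fun a => S.1 a 0,
          Matrix.of fun a b => S.1 a b.succ, by rw [hcons]; exact S.2⟩) ?_
        intro S S' h
        apply Subtype.ext
        rw [← hcons S.1, ← hcons S'.1]
        exact congrArg (fun p : (Σ v : Fin (d + 1) → R, {S : Matrix (Fin (d + 1)) (Fin i) R //
          consCol v S ∈ minorsDvd x (d + 1) (i + 1) k}) => consCol p.1 p.2.1) h
    _ = ∑ v : Fin (d + 1) → R, Nat.card {S : Matrix (Fin (d + 1)) (Fin i) R //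
          consCol v S ∈ minorsDvd x (d + 1) (i + 1) k} := Nat.card_sigma
    _ ≤ ∑ v : Fin (d + 1) → R, ∑ j ∈ Finset.range (k + 1),
          if ∀ r, x ^ j ∣ v r then Nat.card R ^ i * Nat.card (minorsDvd x d i (k - j)) else 0 := by
        refine Finset.sum_le_sum fun v _ => ?_
        obtain ⟨j, hj, hv, hle⟩ := card_fibre_le x N h1 h2 d i k hk v
        refine hle.trans ?_
        refine le_trans ?_ (Finset.single_le_sum (f := fun j => if ∀ r, x ^ j ∣ v r then
          Nat.card R ^ i * Nat.card (minorsDvd x d i (k - j)) else 0)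
          (fun _ _ => Nat.zero_le _) (Finset.mem_range.2 (Nat.lt_succ_of_le hj)))
        rw [if_pos hv]
    _ = _ := by
        rw [Finset.sum_comm]
        refine Finset.sum_congr rfl fun j _ => ?_
        rw [← Finset.sum_filter, Finset.sum_const, smul_eq_mul]
        congr 1
        have e : {v : Fin (d + 1) → R // ∀ r, x ^ j ∣ v r} ≃ (Fin (d + 1) → {a : R // x ^ j ∣ a}) :=
          Equiv.subtypePiEquivPi
        rw [← Fintype.card_subtype, ← Nat.card_eq_fintype_card, Nat.card_congr e, Nat.card_fun]
        simp

/-- With `d = i + e`, a proportion at most `(k + 1) ^ i * q ^ (-k * (e + 1))` of all `d × i` matrices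
over `R` has all its minors divisible by `x ^ k`. The hypotheses say that `R` behaves like
`𝒪 / (x ^ N)` with residue field of size `q`; `k ≤ N` varies because the induction on columns
lowers it, while the ring stays fixed. -/
theorem card_minorsDvd_le {R : Type*} [CommRing R] [Finite R] (x : R) (N q : ℕ) (hq : 1 ≤ q)
    (h0 : ∀ k ≤ N, x ^ k ∣ (1 : R) → k = 0)
    (h1 : ∀ a : R, x ∣ a ∨ IsUnit a)
    (h2 : ∀ j k, j ≤ k → k ≤ N → ∀ a : R, x ^ k ∣ x ^ j * a → x ^ (k - j) ∣ a)
    (h3 : ∀ k ≤ N, Nat.card {a : R // x ^ k ∣ a} * q ^ k ≤ Nat.card R) (e : ℕ) :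
    ∀ i d k : ℕ, d = i + e → k ≤ N →
      Nat.card (minorsDvd x d i k) * q ^ (k * (e + 1)) ≤ (k + 1) ^ i * Nat.card R ^ (d * i) := by
  intro i
  induction i with
  | zero =>
    intro d k _ hk
    by_cases hk0 : k = 0
    · subst hk0
      have : Subsingleton (Matrix (Fin d) (Fin 0) R) := by
        unfold Matrix; infer_instance
      simpa using Finite.card_le_one_iff_subsingleton.2
        (inferInstance : Subsingleton (minorsDvd x d 0 0))
    · have : IsEmpty (minorsDvd x d 0 k) := by
        refine ⟨fun S => hk0 (h0 k hk ?_)⟩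
        simpa using S.2 Fin.elim0
      simp
  | succ i ih =>
    rintro _ k rfl hk
    obtain ⟨d, hd⟩ : ∃ d, d = i + e := ⟨_, rfl⟩
    rw [show i + 1 + e = d + 1 by omega]
    refine (Nat.mul_le_mul_right _ (card_minorsDvd_succ_le x N h1 h2 d i k hk)).trans ?_
    rw [Finset.sum_mul]
    have hterm : ∀ j ∈ Finset.range (k + 1), Nat.card {a : R // x ^ j ∣ a} ^ (d + 1) *
        (Nat.card R ^ i * Nat.card (minorsDvd x d i (k - j))) * q ^ (k * (e + 1))
        ≤ (k + 1) ^ i * Nat.card R ^ ((d + 1) * (i + 1)) := by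
      intro j hj
      have hjk : j ≤ k := Nat.lt_succ_iff.1 (Finset.mem_range.1 hj)
      have hB := ih d (k - j) hd (by omega)
      have hW := Nat.pow_le_pow_left (h3 j (by omega)) (d + 1)
      -- the column contributes `d + 1 = i + e + 1` powers of `q ^ j`, and only `e + 1` are needed
      have hsplit : q ^ (k * (e + 1)) ≤ q ^ ((k - j) * (e + 1)) * (q ^ j) ^ (d + 1) := by
        rw [← pow_mul, ← pow_add]
        refine Nat.pow_le_pow_right hq ?_
        obtain ⟨l, rfl⟩ := Nat.exists_eq_add_of_le hjk
        rw [Nat.add_sub_cancel_left, add_mul, add_comm]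
        gcongr
        omega
      have hpow : (k - j + 1) ^ i ≤ (k + 1) ^ i := Nat.pow_le_pow_left (by omega) i
      calc _ ≤ Nat.card {a : R // x ^ j ∣ a} ^ (d + 1) *
            (Nat.card R ^ i * Nat.card (minorsDvd x d i (k - j))) *
              (q ^ ((k - j) * (e + 1)) * (q ^ j) ^ (d + 1)) := by gcongr
        _ = (Nat.card {a : R // x ^ j ∣ a} * q ^ j) ^ (d + 1) * Nat.card R ^ i *
              (Nat.card (minorsDvd x d i (k - j)) * q ^ ((k - j) * (e + 1))) := by
            rw [mul_pow]; ring
        _ ≤ Nat.card R ^ (d + 1) * Nat.card R ^ i * ((k + 1) ^ i * Nat.card R ^ (d * i)) := by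
            refine Nat.mul_le_mul (Nat.mul_le_mul_right _ (hW.trans_eq rfl)) ?_
            exact hB.trans (Nat.mul_le_mul_right _ hpow)
        _ = _ := by ring
    refine (Finset.sum_le_sum hterm).trans ?_
    rw [Finset.sum_const, Finset.card_range, smul_eq_mul]
    exact le_of_eq (by ring)

/-! ### The ring of truncated power series -/

/-- The truncated ring `𝔽_q[[X]] / (X ^ n)`. -/
abbrev TruncRing (F : Type*) [Field F] (n : ℕ) : Type _ :=
  PowerSeries F ⧸ Ideal.span {(PowerSeries.X : PowerSeries F) ^ n}

/-- The class of `X` in `𝔽_q[[X]] / (X ^ n)`. -/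
noncomputable def truncX (F : Type*) [Field F] (n : ℕ) : TruncRing F n :=
  Ideal.Quotient.mk _ PowerSeries.X

theorem truncX_pow_dvd_mk {F : Type*} [Field F] {n k : ℕ} (hk : k ≤ n) (p : PowerSeries F) :
    truncX F n ^ k ∣ (Ideal.Quotient.mk _ p : TruncRing F n) ↔ PowerSeries.X ^ k ∣ p := by
  constructor
  · rintro ⟨b, hb⟩
    obtain ⟨b, rfl⟩ := Ideal.Quotient.mk_surjective b
    rw [truncX, ← map_pow, ← map_mul, Ideal.Quotient.eq, Ideal.mem_span_singleton] at hb
    have := (pow_dvd_pow PowerSeries.X hk).trans hb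
    exact (dvd_sub_left (Dvd.intro _ rfl)).1 this
  · intro h
    have := map_dvd (Ideal.Quotient.mk (Ideal.span {(PowerSeries.X : PowerSeries F) ^ n})) h
    rwa [map_pow] at this

/-- The polynomial of degree less than `k` with prescribed coefficients, as a power series. -/
noncomputable def polyOf {F : Type*} [Field F] {k : ℕ} (c : Fin k → F) : PowerSeries F :=
  PowerSeries.mk fun j => if h : j < k then c ⟨j, h⟩ else 0

theorem X_pow_dvd_sub_polyOf {F : Type*} [Field F] {k : ℕ} (p : PowerSeries F) :
    PowerSeries.X ^ k ∣ p - polyOf (fun j : Fin k => PowerSeries.coeff (j : ℕ) p) := by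
  rw [PowerSeries.X_pow_dvd_iff]
  intro m hm
  simp [polyOf, hm]

theorem polyOf_injective {F : Type*} [Field F] {k : ℕ} {c c' : Fin k → F}
    (h : PowerSeries.X ^ k ∣ polyOf c - polyOf c') : c = c' := by
  rw [PowerSeries.X_pow_dvd_iff] at h
  ext ⟨j, hj⟩
  have := h j hj
  simp only [polyOf, map_sub, PowerSeries.coeff_mk, hj, dif_pos] at this
  exact sub_eq_zero.1 this

instance truncRing_finite (F : Type*) [Field F] [Fintype F] (n : ℕ) : Finite (TruncRing F n) := by
  refine Finite.of_surjective
    (fun c : Fin n → F => (Ideal.Quotient.mk _ (polyOf c) : TruncRing F n)) fun a => ?_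
  obtain ⟨p, rfl⟩ := Ideal.Quotient.mk_surjective a
  refine ⟨fun j => PowerSeries.coeff (j : ℕ) p, ?_⟩
  rw [eq_comm, Ideal.Quotient.eq, Ideal.mem_span_singleton]
  exact X_pow_dvd_sub_polyOf p

theorem card_truncX_multiples_le (F : Type*) [Field F] [Fintype F] {n k : ℕ} (hk : k ≤ n) :
    Nat.card {a : TruncRing F n // truncX F n ^ k ∣ a} * Fintype.card F ^ k
      ≤ Nat.card (TruncRing F n) := by
  have : Fintype.card F ^ k = Nat.card (Fin k → F) := by simp
  rw [this, ← Nat.card_prod]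
  refine Nat.card_le_card_of_injective
    (fun a => a.1.1 + (Ideal.Quotient.mk _ (polyOf a.2) : TruncRing F n)) ?_
  rintro ⟨⟨a, ha⟩, c⟩ ⟨⟨a', ha'⟩, c'⟩ h
  dsimp only at h
  have hc : c = c' := by
    refine polyOf_injective ((truncX_pow_dvd_mk hk _).1 ?_)
    rw [map_sub, show (Ideal.Quotient.mk _ (polyOf c) : TruncRing F n)
      - Ideal.Quotient.mk _ (polyOf c') = a' - a by linear_combination h]
    exact dvd_sub ha' ha
  subst hc
  simpa using h

theorem card_minorsDvd_truncRing_le (F : Type*) [Field F] [Fintype F] (n i e d : ℕ)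
    (hd : d = i + e) :
    Nat.card (minorsDvd (truncX F n) d i n) * Fintype.card F ^ (n * (e + 1))
      ≤ (n + 1) ^ i * Nat.card (TruncRing F n) ^ (d * i) := by
  refine card_minorsDvd_le (truncX F n) n (Fintype.card F) Fintype.card_pos ?_ ?_ ?_
    (fun k hk => card_truncX_multiples_le F hk) e i d n hd le_rfl
  · intro k hk h
    rw [← map_one (Ideal.Quotient.mk _), truncX_pow_dvd_mk hk] at h
    by_contra hk0
    have := PowerSeries.X_pow_dvd_iff.1 h 0 (Nat.pos_of_ne_zero hk0)
    simp at this
  · intro a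
    obtain ⟨p, rfl⟩ := Ideal.Quotient.mk_surjective a
    by_cases hp : PowerSeries.constantCoeff p = 0
    · exact Or.inl (map_dvd (Ideal.Quotient.mk _) (PowerSeries.X_dvd_iff.2 hp))
    · exact Or.inr ((PowerSeries.isUnit_iff_constantCoeff.2 (isUnit_iff_ne_zero.2 hp)).map _)
  · intro j k hj hk a h
    obtain ⟨p, rfl⟩ := Ideal.Quotient.mk_surjective a
    rw [truncX, ← map_pow, ← map_pow, ← map_mul, map_pow, ← truncX, truncX_pow_dvd_mk hk] at h
    rw [truncX_pow_dvd_mk (by omega)]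
    refine (mul_dvd_mul_iff_left (pow_ne_zero j PowerSeries.X_ne_zero)).1 ?_
    rwa [← pow_add, Nat.add_sub_cancel' hj]

/-! ### Laurent series: absolute value, integrality and topology -/

section LaurentBasics

variable {F : Type*} [Field F]

/-- The part of a Laurent series with nonnegative exponents, as a power series. -/
noncomputable def toPS (x : LaurentSeries F) : PowerSeries F :=
  PowerSeries.mk fun j => x.coeff (j : ℤ)

theorem toPS_add (x y : LaurentSeries F) : toPS (x + y) = toPS x + toPS y := by
  ext j; simp [toPS]

theorem toPS_coe (p : PowerSeries F) : toPS (HahnSeries.ofPowerSeries ℤ F p) = p := by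
  ext j
  rw [toPS, PowerSeries.coeff_mk]
  exact LaurentSeries.coeff_coe_powerSeries p j

theorem isOpen_coeff_eq_zero (n : ℤ) : IsOpen {x : LaurentSeries F | ∀ m < n, x.coeff m = 0} := by
  obtain ⟨y, hy⟩ := LaurentSeries.valuation_surjective F (WithZero.exp (-n))
  have h0 : (Valued.v : Valuation (LaurentSeries F) (WithZero (Multiplicative ℤ))).restrict y ≠ 0 := by
    rw [← zero_lt_iff, Valuation.restrict_pos_iff, hy]
    exact WithZero.exp_pos
  convert Valued.isOpen_closedBall (LaurentSeries F) h0 using 1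
  ext x
  rw [Set.mem_ofPred_eq, Set.mem_ofPred_eq, Valuation.restrict_le_iff, hy,
    LaurentSeries.valuation_le_iff_coeff_lt_eq_zero]

instance matrix_borelSpace (d i : ℕ) :
    BorelSpace (Matrix (Fin d) (Fin i) (LaurentSeries F)) := ⟨rfl⟩

theorem measurable_add_left' {d i : ℕ} (a : Matrix (Fin d) (Fin i) (LaurentSeries F)) :
    Measurable fun s => a + s :=
  (continuous_const.add continuous_id).measurable

end LaurentBasics

section Valuation

variable {F : Type*} [Field F] [Fintype F]

theorem one_lt_card : (1 : ℝ) < Fintype.card F := by exact_mod_cast Fintype.one_lt_card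

theorem absv_le_iff (x : LaurentSeries F) (n : ℕ) :
    absv F x ≤ (Fintype.card F : ℝ) ^ (-(n : ℤ)) ↔ ∀ m : ℤ, m < n → x.coeff m = 0 := by
  by_cases hx : x = 0
  · subst hx
    simp [absv]
  · rw [absv, if_neg hx, zpow_le_zpow_iff_right₀ one_lt_card, neg_le_neg_iff]
    constructor
    · intro h m hm
      exact HahnSeries.coeff_eq_zero_of_lt_order (hm.trans_le h)
    · intro h
      by_contra! hlt
      exact hx (HahnSeries.coeff_order_eq_zero.1 (h _ hlt))

theorem absv_le_one_iff (x : LaurentSeries F) : absv F x ≤ 1 ↔ ∀ m : ℤ, m < 0 → x.coeff m = 0 := by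
  simpa using absv_le_iff x 0

theorem absv_eq_zero_or (x : LaurentSeries F) (hx : absv F x ≤ 1) :
    absv F x = 0 ∨ ∃ n : ℕ, absv F x = (Fintype.card F : ℝ) ^ (-(n : ℤ)) := by
  by_cases h : x = 0
  · left; simp [absv, h]
  · right
    have : 0 ≤ x.order := by
      by_contra! hlt
      exact h (HahnSeries.coeff_order_eq_zero.1 ((absv_le_one_iff x).1 hx _ hlt))
    refine ⟨x.order.toNat, ?_⟩
    rw [absv, if_neg h, Int.toNat_of_nonneg this]

theorem coe_toPS {x : LaurentSeries F} (hx : absv F x ≤ 1) :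
    HahnSeries.ofPowerSeries ℤ F (toPS x) = x := by
  rw [absv_le_one_iff] at hx
  ext m
  rw [PowerSeries.coeff_coe]
  split_ifs with h
  · exact (hx m h).symm
  · rw [toPS, PowerSeries.coeff_mk, Int.natAbs_of_nonneg (not_lt.1 h)]

theorem absv_coe_le_iff (p : PowerSeries F) (n : ℕ) :
    absv F (HahnSeries.ofPowerSeries ℤ F p) ≤ (Fintype.card F : ℝ) ^ (-(n : ℤ)) ↔
      PowerSeries.X ^ n ∣ p := by
  rw [absv_le_iff, PowerSeries.X_pow_dvd_iff]
  constructor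
  · intro h m hm
    have := h m (by exact_mod_cast hm)
    rwa [LaurentSeries.coeff_coe_powerSeries] at this
  · intro h m hm
    rw [PowerSeries.coeff_coe]
    split_ifs with h0
    · rfl
    · exact h _ (by omega)

theorem absv_coe_le_one (p : PowerSeries F) : absv F (HahnSeries.ofPowerSeries ℤ F p) ≤ 1 := by
  simpa using (absv_coe_le_iff p 0).2 (by simp)

end Valuation

/-! ### Reduction of integral matrices and the measure of degenerate ones -/

section Reduction

variable {F : Type*} [Field F] [Fintype F] {d i : ℕ}

/-- Reduction modulo `X ^ n` of an integral matrix (negative exponents, if any, are dropped). -/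
noncomputable def red (n : ℕ) (s : Matrix (Fin d) (Fin i) (LaurentSeries F)) :
    Matrix (Fin d) (Fin i) (TruncRing F n) :=
  s.map fun x => Ideal.Quotient.mk _ (toPS x)

theorem red_add (n : ℕ) (s t : Matrix (Fin d) (Fin i) (LaurentSeries F)) :
    red n (s + t) = red n s + red n t := by
  ext a b
  simp [red, toPS_add]

theorem exists_red_eq (n : ℕ) (S : Matrix (Fin d) (Fin i) (TruncRing F n)) :
    ∃ s ∈ intMat F d i, red n s = S := by
  choose p hp using fun a b => Ideal.Quotient.mk_surjective (S a b)
  refine ⟨Matrix.of fun a b => HahnSeries.ofPowerSeries ℤ F (p a b),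
    fun a b => absv_coe_le_one _, ?_⟩
  ext a b
  simp [red, toPS_coe, hp]

theorem minor_eq_coe {s : Matrix (Fin d) (Fin i) (LaurentSeries F)} (hs : s ∈ intMat F d i)
    (I : {I : Finset (Fin d) // I.card = i}) :
    minor F s I = HahnSeries.ofPowerSeries ℤ F (((s.map toPS).submatrix
      (fun a : Fin i => ((I.1.orderIsoOfFin I.2 a : {x // x ∈ I.1}) : Fin d)) id).det) := by
  rw [RingHom.map_det, minor]
  congr 1
  ext a b : 1
  simp only [RingHom.mapMatrix_apply, Matrix.map_apply, Matrix.submatrix_apply]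
  exact (coe_toPS (hs _ _)).symm

theorem wedgeNorm_eq_zero_or (hid : i ≤ d) {s : Matrix (Fin d) (Fin i) (LaurentSeries F)}
    (hs : s ∈ intMat F d i) :
    wedgeNorm F s = 0 ∨ ∃ n : ℕ, wedgeNorm F s = (Fintype.card F : ℝ) ^ (-(n : ℤ)) := by
  obtain ⟨I₀, -, hI₀⟩ := Finset.exists_subset_card_eq (s := (Finset.univ : Finset (Fin d)))
    (n := i) (by simpa using hid)
  have : Nonempty {I : Finset (Fin d) // I.card = i} := ⟨⟨I₀, hI₀⟩⟩
  obtain ⟨I, hI⟩ := exists_eq_ciSup_of_finite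
    (f := fun I : {I : Finset (Fin d) // I.card = i} => absv F (minor F s I))
  rw [wedgeNorm, ← hI, minor_eq_coe hs]
  exact absv_eq_zero_or _ (absv_coe_le_one _)

/-- The wedge norm only sees minors indexed by row sets; a minor with an arbitrary row map vanishes
if the map is not injective, and otherwise is such a minor up to sign. -/
theorem red_mem_minorsDvd {n : ℕ} {s : Matrix (Fin d) (Fin i) (LaurentSeries F)}
    (hs : s ∈ intMat F d i) (h : wedgeNorm F s ≤ (Fintype.card F : ℝ) ^ (-(n : ℤ))) :
    red n s ∈ minorsDvd (truncX F n) d i n := by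
  intro f
  have hred : ((red n s).submatrix f id).det
      = Ideal.Quotient.mk _ (((s.map toPS).submatrix f id).det) := by
    rw [RingHom.map_det]; rfl
  rw [hred, truncX_pow_dvd_mk le_rfl]
  by_cases hf : Function.Injective f
  · let I : {I : Finset (Fin d) // I.card = i} :=
      ⟨Finset.univ.image f, by rw [Finset.card_image_of_injective _ hf, Finset.card_fin]⟩
    have hI : PowerSeries.X ^ n ∣ ((s.map toPS).submatrix
        (fun a : Fin i => ((I.1.orderIsoOfFin I.2 a : {x // x ∈ I.1}) : Fin d)) id).det := by
      rw [← absv_coe_le_iff, ← minor_eq_coe hs]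
      exact (le_ciSup (f := fun I => absv F (minor F s I)) (Set.finite_range _).bddAbove I).trans h
    let g : Fin i → Fin i := fun a => (I.1.orderIsoOfFin I.2).symm
      ⟨f a, Finset.mem_image_of_mem f (Finset.mem_univ a)⟩
    have hg : ∀ a, ((I.1.orderIsoOfFin I.2 (g a) : {x // x ∈ I.1}) : Fin d) = f a := by
      intro a; simp [g]
    have hgi : Function.Injective g := by
      intro a b hab
      apply hf
      rw [← hg a, ← hg b, hab]
    let σ : Equiv.Perm (Fin i) := Equiv.ofBijective g (Finite.injective_iff_bijective.1 hgi)
    have : (s.map toPS).submatrix f id = ((s.map toPS).submatrix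
        (fun a : Fin i => ((I.1.orderIsoOfFin I.2 a : {x // x ∈ I.1}) : Fin d)) id).submatrix
          σ id := by
      ext a b : 1
      simp only [Matrix.submatrix_apply]
      rw [show σ a = g a from rfl, hg]
      rfl
    rw [this, Matrix.det_permute]
    exact hI.mul_left _
  · simp only [Function.Injective, not_forall] at hf
    obtain ⟨a, b, hab, hne⟩ := hf
    rw [Matrix.det_zero_of_row_eq hne (by ext c; simp [hab])]
    exact dvd_zero _

/-- The residue class of integral matrices reducing to `S` modulo `X ^ n`. -/
def residueClass (n : ℕ) (S : Matrix (Fin d) (Fin i) (TruncRing F n)) :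
    Set (Matrix (Fin d) (Fin i) (LaurentSeries F)) :=
  {s | s ∈ intMat F d i ∧ red n s = S}

theorem residueClass_zero (n : ℕ) : residueClass n (0 : Matrix (Fin d) (Fin i) (TruncRing F n))
    = {s | ∀ a b, ∀ m : ℤ, m < n → (s a b).coeff m = 0} := by
  ext s
  constructor
  · rintro ⟨hs, h0⟩ a b
    rw [← absv_le_iff, ← coe_toPS (hs a b), absv_coe_le_iff, ← truncX_pow_dvd_mk le_rfl]
    have : (Ideal.Quotient.mk _ (toPS (s a b)) : TruncRing F n) = 0 := congrFun (congrFun h0 a) b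
    rw [this]
    exact dvd_zero _
  · intro h
    have hs : s ∈ intMat F d i := fun a b => (absv_le_one_iff _).2
      fun m hm => h a b m (hm.trans_le (by positivity))
    refine ⟨hs, ?_⟩
    ext a b
    have := h a b
    rw [← absv_le_iff, ← coe_toPS (hs a b), absv_coe_le_iff] at this
    exact Ideal.Quotient.eq_zero_iff_mem.2 (Ideal.mem_span_singleton.2 this)

theorem measurableSet_residueClass_zero (n : ℕ) :
    MeasurableSet (residueClass n (0 : Matrix (Fin d) (Fin i) (TruncRing F n))) := by
  apply IsOpen.measurableSet
  rw [residueClass_zero]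
  simp only [Set.ofPred_forall]
  refine isOpen_iInter_of_finite fun a => isOpen_iInter_of_finite fun b => ?_
  have := (isOpen_coeff_eq_zero (F := F) n).preimage
    (continuous_id.matrix_elem a b : Continuous fun s : Matrix (Fin d) (Fin i) (LaurentSeries F) => s a b)
  convert this using 1
  ext s
  simp

/-- Residue classes modulo `X ^ n` are translates of each other. -/
theorem residueClass_eq_preimage (n : ℕ) (S : Matrix (Fin d) (Fin i) (TruncRing F n)) :
    ∃ a, residueClass n S = (fun s => a + s) ⁻¹' residueClass n 0 := by
  obtain ⟨s₀, hs₀, rfl⟩ := exists_red_eq n S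
  refine ⟨-s₀, ?_⟩
  have hint : ∀ s, s ∈ intMat F d i ↔ -s₀ + s ∈ intMat F d i := by
    intro s
    simp only [intMat, Set.mem_ofPred_eq, absv_le_one_iff] at hs₀ ⊢
    refine forall_congr' fun a => forall_congr' fun b => forall_congr' fun m =>
      forall_congr' fun hm => ?_
    simp [hs₀ a b m hm]
  ext s
  have h2 : red n s = red n s₀ + red n (-s₀ + s) := by rw [← red_add]; simp
  simp only [residueClass, Set.mem_preimage, Set.mem_ofPred_eq, ← hint]
  rw [h2]
  simp

theorem measurableSet_residueClass (n : ℕ) (S : Matrix (Fin d) (Fin i) (TruncRing F n)) :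
    MeasurableSet (residueClass n S) := by
  obtain ⟨a, ha⟩ := residueClass_eq_preimage n S
  rw [ha]
  exact measurable_add_left' a (measurableSet_residueClass_zero n)

/-- The integral matrices whose reduction modulo `X ^ n` has all `i × i` minors divisible by
`X ^ n`, that is, equal to zero. -/
def degenerate (F : Type*) [Field F] [Fintype F] (d i n : ℕ) :
    Set (Matrix (Fin d) (Fin i) (LaurentSeries F)) :=
  {s | s ∈ intMat F d i ∧ red n s ∈ minorsDvd (truncX F n) d i n}

theorem degenerate_eq (n : ℕ) : degenerate F d i n
    = ⋃ S : minorsDvd (truncX F n) d i n, residueClass n S.1 := by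
  ext s
  simp only [degenerate, residueClass, Set.mem_iUnion, Set.mem_ofPred_eq]
  constructor
  · rintro ⟨h, h'⟩
    exact ⟨⟨_, h'⟩, h, rfl⟩
  · rintro ⟨S, h, h'⟩
    exact ⟨h, h' ▸ S.2⟩

theorem intMat_eq (n : ℕ) : intMat F d i
    = ⋃ S : Matrix (Fin d) (Fin i) (TruncRing F n), residueClass n S := by
  ext s
  simp [residueClass]

instance matrix_truncRing_finite (n : ℕ) : Finite (Matrix (Fin d) (Fin i) (TruncRing F n)) :=
  inferInstanceAs (Finite (Fin d → Fin i → TruncRing F n))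

theorem measurableSet_intMat : MeasurableSet (intMat F d i) := by
  rw [intMat_eq 0]
  exact MeasurableSet.iUnion fun S => measurableSet_residueClass 0 S

theorem measurableSet_degenerate (n : ℕ) : MeasurableSet (degenerate F d i n) := by
  rw [degenerate_eq]
  exact MeasurableSet.iUnion fun S => measurableSet_residueClass n S.1

/-- Residue classes modulo `X ^ n` all have the same measure by translation invariance, so the
measure of a union of them is a proportion of matrices over `𝔽_q[[X]] / (X ^ n)`. -/
theorem measure_degenerate_le (μ : Measure (Matrix (Fin d) (Fin i) (LaurentSeries F)))
    (hinv : ∀ a, μ.map (fun s => a + s) = μ) (hnorm : μ (intMat F d i) = 1)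
    (e : ℕ) (hd : d = i + e) (n : ℕ) :
    μ (degenerate F d i n)
      ≤ ENNReal.ofReal (((n : ℝ) + 1) ^ i / (Fintype.card F : ℝ) ^ (n * (e + 1))) := by
  have hclass : ∀ S : Matrix (Fin d) (Fin i) (TruncRing F n),
      μ (residueClass n S) = μ (residueClass n 0) := by
    intro S
    obtain ⟨a, ha⟩ := residueClass_eq_preimage n S
    rw [ha, ← Measure.map_apply (measurable_add_left' a) (measurableSet_residueClass_zero n),
      hinv a]
  have hone : (Nat.card (TruncRing F n) : ℝ≥0∞) ^ (d * i)
      * μ (residueClass n (0 : Matrix (Fin d) (Fin i) (TruncRing F n))) = 1 := by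
    have := Fintype.ofFinite (Matrix (Fin d) (Fin i) (TruncRing F n))
    rw [← hnorm, intMat_eq n, measure_iUnion (fun S T hST => Set.disjoint_left.2
      fun s hs ht => hST (hs.2.symm.trans ht.2)) (measurableSet_residueClass n), tsum_fintype]
    simp only [hclass, Finset.sum_const, nsmul_eq_mul, Finset.card_univ, ← Nat.card_eq_fintype_card]
    congr 1
    have : Nat.card (Matrix (Fin d) (Fin i) (TruncRing F n)) = Nat.card (TruncRing F n) ^ (d * i) := by
      unfold Matrix
      rw [Nat.card_fun, Nat.card_fun, Nat.card_fin, Nat.card_fin, ← pow_mul, mul_comm]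
    rw [this, Nat.cast_pow]
  have hdeg : μ (degenerate F d i n) ≤ (Nat.card (minorsDvd (truncX F n) d i n) : ℝ≥0∞)
      * μ (residueClass n (0 : Matrix (Fin d) (Fin i) (TruncRing F n))) := by
    have := Fintype.ofFinite (minorsDvd (truncX F n) d i n)
    rw [degenerate_eq]
    refine (measure_iUnion_le _).trans ?_
    rw [tsum_fintype]
    simp only [hclass, Finset.sum_const, nsmul_eq_mul, Finset.card_univ, ← Nat.card_eq_fintype_card,
      le_refl]
  have hcount : (Nat.card (minorsDvd (truncX F n) d i n) : ℝ≥0∞)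
      * (Fintype.card F : ℝ≥0∞) ^ (n * (e + 1))
      ≤ ((n : ℝ≥0∞) + 1) ^ i * (Nat.card (TruncRing F n) : ℝ≥0∞) ^ (d * i) := by
    exact_mod_cast card_minorsDvd_truncRing_le F n i e d hd
  have hq : (0 : ℝ) < Fintype.card F := zero_lt_one.trans one_lt_card
  rw [ENNReal.ofReal_div_of_pos (pow_pos hq _), ENNReal.ofReal_pow (by positivity),
    ENNReal.ofReal_pow hq.le, ENNReal.ofReal_natCast, ENNReal.ofReal_add (by positivity) one_pos.le,
    ENNReal.ofReal_natCast, ENNReal.ofReal_one,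
    ENNReal.le_div_iff_mul_le (Or.inr (by simp)) (Or.inr (by finiteness))]
  calc _ ≤ (Nat.card (minorsDvd (truncX F n) d i n) : ℝ≥0∞)
        * μ (residueClass n (0 : Matrix (Fin d) (Fin i) (TruncRing F n)))
          * (Fintype.card F : ℝ≥0∞) ^ (n * (e + 1)) := by gcongr
    _ = ((Nat.card (minorsDvd (truncX F n) d i n) : ℝ≥0∞)
        * (Fintype.card F : ℝ≥0∞) ^ (n * (e + 1)))
          * μ (residueClass n (0 : Matrix (Fin d) (Fin i) (TruncRing F n))) := by ring
    _ ≤ (((n : ℝ≥0∞) + 1) ^ i * (Nat.card (TruncRing F n) : ℝ≥0∞) ^ (d * i))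
          * μ (residueClass n (0 : Matrix (Fin d) (Fin i) (TruncRing F n))) := by gcongr
    _ = ((n : ℝ≥0∞) + 1) ^ i := by rw [mul_assoc, hone, mul_one]

end Reduction

/-! ### Summation over the values of the wedge norm -/

theorem tsum_ofReal_pow_mul_geometric_lt_top (i : ℕ) {r : ℝ} (h0 : 0 < r) (h1 : r < 1) :
    ∑' n : ℕ, ENNReal.ofReal (((n : ℝ) + 1) ^ i * r ^ n) < ⊤ := by
  have hs : Summable fun n : ℕ => ((n : ℝ) + 1) ^ i * r ^ n := by
    have := summable_pow_mul_geometric_of_norm_lt_one (R := ℝ) i (r := r)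
      (by rwa [Real.norm_of_nonneg h0.le])
    have h2 := ((summable_nat_add_iff 1).2 this).mul_right r⁻¹
    refine h2.congr fun n => ?_
    push_cast
    rw [pow_succ, ← mul_assoc, mul_assoc, mul_inv_cancel₀ h0.ne', mul_one]
  exact hs.tsum_ofReal_lt_top

/-- The wedge norm of an integral matrix is `0` or `q ^ (-n)` with `n ≥ 0`. In the second case the
`n`-th term of the series equals the left-hand side; in the first case every indicator is `1`, and
for `β ≥ 0` the series is infinite, so no separate argument that the zero locus is null is
needed. -/
theorem rpow_wedgeNorm_le {F : Type*} [Field F] [Fintype F] {d i : ℕ} (hid : i ≤ d) (β : ℝ)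
    {s : Matrix (Fin d) (Fin i) (LaurentSeries F)} (hs : s ∈ intMat F d i) :
    ENNReal.ofReal (wedgeNorm F s) ^ (-β) ≤ ∑' n : ℕ, (degenerate F d i n).indicator
      (fun _ => ENNReal.ofReal ((Fintype.card F : ℝ) ^ (-(n : ℤ))) ^ (-β)) s := by
  have hq := one_lt_card (F := F)
  rcases wedgeNorm_eq_zero_or hid hs with h | ⟨n, hn⟩
  · have hmem : ∀ n, s ∈ degenerate F d i n :=
      fun n => ⟨hs, red_mem_minorsDvd hs (h.trans_le (by positivity))⟩
    rcases lt_or_ge β 0 with hβ | hβ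
    · rw [h, ENNReal.ofReal_zero, ENNReal.zero_rpow_of_pos (by linarith)]
      exact zero_le
    · refine le_top.trans ?_
      rw [← ENNReal.tsum_const_eq_top_of_ne_zero (α := ℕ) (one_ne_zero (α := ℝ≥0∞))]
      refine ENNReal.tsum_le_tsum fun n => ?_
      rw [Set.indicator_of_mem (hmem n), ENNReal.rpow_neg]
      refine ENNReal.one_le_inv.2 (ENNReal.rpow_le_one ?_ hβ)
      rw [ENNReal.ofReal_le_one]
      exact zpow_le_one_of_nonpos₀ hq.le (by simp)
  · refine le_trans ?_ (ENNReal.le_tsum n)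
    have hmem : s ∈ degenerate F d i n := ⟨hs, red_mem_minorsDvd hs hn.le⟩
    rw [Set.indicator_of_mem hmem, hn]

/-- **Lemma 3.6.** For `1 ≤ i ≤ d` and every real `β < d - i + 1`, the integral
`∫_{M_{d,i}(𝒪)} ‖s₁ ∧ ⋯ ∧ s_i‖^{-β} dμ_{di}(s)` is finite (in the extended sense: the
integrand, valued in `[0,∞]`, is infinite only where the columns of `s` are linearly
dependent); `μ_{di}` is the additive Haar measure normalized so that
`μ_{di}(M_{d,i}(𝒪)) = 1`. -/
theorem stmt5 (F : Type*) [Field F] [Fintype F] (d i : ℕ) (hi : 1 ≤ i) (hid : i ≤ d)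
    (μ : MeasureTheory.Measure (Matrix (Fin d) (Fin i) (LaurentSeries F)))
    (hinv : ∀ a, μ.map (fun s => a + s) = μ)
    (hnorm : μ (intMat F d i) = 1)
    (β : ℝ) (hβ : β < (d : ℝ) - i + 1) :
    (∫⁻ s in intMat F d i, (ENNReal.ofReal (wedgeNorm F s)) ^ (-β) ∂μ) < ⊤ := by
  obtain ⟨e, hd⟩ := Nat.exists_eq_add_of_le hid
  have hq := one_lt_card (F := F)
  have hq0 : (0 : ℝ) < Fintype.card F := zero_lt_one.trans hq
  have hβe : β - (e + 1) < 0 := by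
    rw [hd] at hβ
    push_cast at hβ
    linarith
  calc (∫⁻ s in intMat F d i, (ENNReal.ofReal (wedgeNorm F s)) ^ (-β) ∂μ)
      ≤ ∫⁻ s in intMat F d i, ∑' n : ℕ, (degenerate F d i n).indicator
          (fun _ => ENNReal.ofReal ((Fintype.card F : ℝ) ^ (-(n : ℤ))) ^ (-β)) s ∂μ :=
        setLIntegral_mono' measurableSet_intMat fun s hs => rpow_wedgeNorm_le hid β hs
    _ ≤ ∫⁻ s, ∑' n : ℕ, (degenerate F d i n).indicator
          (fun _ => ENNReal.ofReal ((Fintype.card F : ℝ) ^ (-(n : ℤ))) ^ (-β)) s ∂μ :=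
        setLIntegral_le_lintegral _ _
    _ = ∑' n : ℕ, ENNReal.ofReal ((Fintype.card F : ℝ) ^ (-(n : ℤ))) ^ (-β)
          * μ (degenerate F d i n) := by
        rw [lintegral_tsum fun n =>
          (measurable_const.indicator (measurableSet_degenerate n)).aemeasurable]
        simp only [lintegral_indicator_const (measurableSet_degenerate _)]
    _ ≤ ∑' n : ℕ, ENNReal.ofReal (((n : ℝ) + 1) ^ i
          * ((Fintype.card F : ℝ) ^ (β - (e + 1))) ^ n) := by
        refine ENNReal.tsum_le_tsum fun n => ?_
        refine (mul_le_mul_right (measure_degenerate_le μ hinv hnorm e hd n) _).trans ?_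
        rw [ENNReal.ofReal_rpow_of_pos (zpow_pos hq0 _), ← ENNReal.ofReal_mul (by positivity)]
        refine le_of_eq (congrArg _ ?_)
        rw [← Real.rpow_intCast, ← Real.rpow_natCast _ (n * (e + 1)), ← Real.rpow_natCast _ n,
          ← Real.rpow_mul hq0.le, ← Real.rpow_mul hq0.le, div_eq_mul_inv, ← Real.rpow_neg hq0.le,
          mul_left_comm, ← Real.rpow_add hq0]
        congr 2
        push_cast
        ring
    _ < ⊤ := tsum_ofReal_pow_mul_geometric_lt_top i (Real.rpow_pos_of_pos hq0 _)
        (Real.rpow_lt_one_of_one_lt_of_neg hq hβe)
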